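/- arXiv:1704.01869 — 7 statements merged into one kernel-verified Lean document; each statement's English description precedes it below -/
import Mathlib

section
/- Let q = (1/|S|)·e ∈ ℝ^S be the uniform probability vector on S and θ = 1−γ. Let μ̂ ∈ ℝ^{S×A} satisfy μ̂ ≥ 0 componentwise, Σ_{i∈S,a∈A} μ̂_{i,a} = 1, and Σ_{a∈A} μ̂_{i,a} ≥ θ q_i for every i∈S, and let π̂ be the randomized policy with π̂_{i,a} = μ̂_{i,a} / Σ_{a'∈A} μ̂_{i,a'}. Then ‖v* − v^{π̂}‖_∞ ≤ (|S|/(1−γ)²) · Σ_{i∈S,a∈A} μ̂_{i,a} ( v*_i − γ Σ_{j∈S} p_{ij}(a) v*_j − r_a(i) ). -/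
/-!
Write `D = v* - v^π̂` and let `c_i = ∑ₐ π̂_{i,a} δ_{i,a}` be the average under `π̂` of the Bellman
deficits `δ_{i,a} = v*_i - γ ∑ⱼ p_{ij}(a) v*_j - r_a(i) ≥ 0`. Subtracting the two fixed-point
equations gives `D = γ P^π̂ D + c` with `P^π̂` row-stochastic, so a discounted maximum principle
(`discounted_bounds`) yields `0 ≤ D ≤ (max c) / (1 - γ)`. Since the marginal of `μ̂` at each state
is at least `(1 - γ) / |S|`, each `c_i = (∑ₐ μ̂_{i,a} δ_{i,a}) / ∑ₐ μ̂_{i,a}` is at most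
`|S| / (1 - γ)` times the full sum of `μ̂_{i,a} δ_{i,a}`.
-/

/-- Discounted maximum principle: evaluate the equation at a minimizer and at a maximizer of `D`. -/
lemma discounted_bounds {S : Type*} [Fintype S] [Nonempty S] {γ : ℝ} (hγ0 : 0 < γ) (hγ1 : γ < 1)
    (Q : S → S → ℝ) (hQ0 : ∀ i j, 0 ≤ Q i j) (hQ1 : ∀ i, ∑ j, Q i j = 1)
    (D c : S → ℝ) (hD : ∀ i, D i = γ * ∑ j, Q i j * D j + c i) (hc0 : ∀ i, 0 ≤ c i)
    (C : ℝ) (hcC : ∀ i, c i ≤ C) (i : S) : 0 ≤ D i ∧ D i ≤ C / (1 - γ) := by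
  constructor
  · obtain ⟨k, hk⟩ := Finite.exists_min D
    have h1 : D k ≤ ∑ j, Q k j * D j := by
      calc D k = ∑ j, Q k j * D k := by rw [← Finset.sum_mul, hQ1, one_mul]
        _ ≤ _ := Finset.sum_le_sum fun j _ => mul_le_mul_of_nonneg_left (hk j) (hQ0 k j)
    have h2 := mul_le_mul_of_nonneg_left h1 hγ0.le
    have h3 : 0 ≤ (1 - γ) * D k := by linarith [hD k, hc0 k]
    exact (nonneg_of_mul_nonneg_right h3 (by linarith)).trans (hk i)
  · obtain ⟨k, hk⟩ := Finite.exists_max D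
    have h1 : ∑ j, Q k j * D j ≤ D k := by
      calc _ ≤ ∑ j, Q k j * D k :=
            Finset.sum_le_sum fun j _ => mul_le_mul_of_nonneg_left (hk j) (hQ0 k j)
        _ = D k := by rw [← Finset.sum_mul, hQ1, one_mul]
    have h2 := mul_le_mul_of_nonneg_left h1 hγ0.le
    refine (hk i).trans ?_
    rw [le_div_iff₀ (by linarith)]
    linarith [hD k, hcC k]

/-- For the uniform distribution `q` and `θ = 1 - γ`, any `μ̂` in the dual
feasible set `U_{θ,q}` with induced policy `π̂` satisfies
`‖v* − v^{π̂}‖_∞ ≤ (|S|/(1−γ)²) · Gap(μ̂)`. -/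
theorem stmt_0
    {S A : Type*} [Fintype S] [Fintype A] [Nonempty S] [Nonempty A]
    (γ : ℝ) (hγ : γ ∈ Set.Ioo (0 : ℝ) 1)
    (p : S → A → S → ℝ)
    (hp0 : ∀ i a j, 0 ≤ p i a j) (hp1 : ∀ i a, ∑ j, p i a j = 1)
    (r : S → A → S → ℝ) (hr : ∀ i a j, r i a j ∈ Set.Icc (0 : ℝ) 1)
    -- the optimal value vector: unique solution of the Bellman equation
    (vstar : S → ℝ)
    (hvstar : ∀ i, vstar i = ⨆ a : A,
      (γ * ∑ j, p i a j * vstar j + ∑ j, p i a j * r i a j))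
    -- q is the uniform probability vector and θ = 1 - γ
    (q : S → ℝ) (hq : ∀ i, q i = 1 / (Fintype.card S : ℝ))
    (θ : ℝ) (hθ : θ = 1 - γ)
    -- μ̂ belongs to U_{θ,q}
    (muhat : S → A → ℝ)
    (hmu0 : ∀ i a, 0 ≤ muhat i a)
    (hmu1 : ∑ i, ∑ a, muhat i a = 1)
    (hmuq : ∀ i, θ * q i ≤ ∑ a, muhat i a)
    -- π̂ is the induced randomized policy
    (pihat : S → A → ℝ)
    (hpihat : ∀ i a, pihat i a = muhat i a / ∑ a', muhat i a')
    -- v^{π̂}: the value vector of the policy π̂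
    (vhat : S → ℝ)
    (hvhat : ∀ i, vhat i =
      γ * ∑ j, (∑ a, pihat i a * p i a j) * vhat j
        + ∑ a, pihat i a * ∑ j, p i a j * r i a j) :
    ‖(fun i => vstar i - vhat i)‖ ≤
      ((Fintype.card S : ℝ) / (1 - γ) ^ 2) *
        ∑ i, ∑ a, muhat i a *
          (vstar i - γ * ∑ j, p i a j * vstar j - ∑ j, p i a j * r i a j) := by
  obtain ⟨hγ0, hγ1⟩ := hγ
  have hn : (0 : ℝ) < Fintype.card S := by exact_mod_cast Fintype.card_pos
  have h1γ : 0 < 1 - γ := by linarith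
  set δ : S → A → ℝ := fun i a =>
    vstar i - γ * ∑ j, p i a j * vstar j - ∑ j, p i a j * r i a j with hδ
  have hδ0 : ∀ i a, 0 ≤ δ i a := by
    intro i a
    have h := le_ciSup (f := fun a : A =>
      (γ * ∑ j, p i a j * vstar j + ∑ j, p i a j * r i a j)) (Set.finite_range _).bddAbove a
    rw [← hvstar i] at h
    simp only [hδ]
    linarith
  set G := ∑ i, ∑ a, muhat i a * δ i a with hG
  have hrow0 : ∀ i, 0 ≤ ∑ a, muhat i a * δ i a := fun i =>
    Finset.sum_nonneg fun a _ => mul_nonneg (hmu0 i a) (hδ0 i a)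
  have hrowG : ∀ i, ∑ a, muhat i a * δ i a ≤ G := fun i =>
    Finset.single_le_sum (f := fun i => ∑ a, muhat i a * δ i a)
      (fun i _ => hrow0 i) (Finset.mem_univ i)
  have hw : ∀ i, (1 - γ) / Fintype.card S ≤ ∑ a, muhat i a := by
    intro i
    have h := hmuq i
    rwa [hθ, hq, mul_one_div] at h
  have hwpos : ∀ i, 0 < ∑ a, muhat i a := fun i => (div_pos h1γ hn).trans_le (hw i)
  have hπ0 : ∀ i a, 0 ≤ pihat i a := fun i a => by
    rw [hpihat]; exact div_nonneg (hmu0 i a) (hwpos i).le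
  have hπ1 : ∀ i, ∑ a, pihat i a = 1 := fun i => by
    simp only [hpihat]
    rw [← Finset.sum_div, div_self (hwpos i).ne']
  have hswap : ∀ i (v : S → ℝ), ∑ j, (∑ a, pihat i a * p i a j) * v j =
      ∑ a, pihat i a * ∑ j, p i a j * v j := by
    intro i v
    simp only [Finset.sum_mul, Finset.mul_sum]
    rw [Finset.sum_comm]
    simp only [mul_assoc]
  have hc : ∀ i, ∑ a, pihat i a * δ i a = (∑ a, muhat i a * δ i a) / ∑ a, muhat i a := by
    intro i
    simp only [hpihat]
    rw [Finset.sum_div]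
    exact Finset.sum_congr rfl fun a _ => by ring
  have key := discounted_bounds hγ0 hγ1 (fun i j => ∑ a, pihat i a * p i a j)
    (fun i j => Finset.sum_nonneg fun a _ => mul_nonneg (hπ0 i a) (hp0 i a j))
    (fun i => by
      have h := hswap i (fun _ => 1)
      simpa only [mul_one, hp1, hπ1] using h)
    (fun i => vstar i - vhat i) (fun i => ∑ a, pihat i a * δ i a)
    (fun i => by
      have e : ∑ a, pihat i a * δ i a = vstar i
          - γ * ∑ j, (∑ a, pihat i a * p i a j) * vstar j
          - ∑ a, pihat i a * ∑ j, p i a j * r i a j := by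
        rw [hswap]
        simp only [hδ, mul_sub, Finset.sum_sub_distrib]
        rw [← Finset.sum_mul, hπ1, one_mul, Finset.mul_sum]
        simp only [mul_left_comm γ]
      simp only [mul_sub, Finset.sum_sub_distrib]
      rw [e]
      linarith [hvhat i])
    (fun i => Finset.sum_nonneg fun a _ => mul_nonneg (hπ0 i a) (hδ0 i a))
    (Fintype.card S / (1 - γ) * G)
    (fun i => by
      have hG0 : 0 ≤ G := (hrow0 i).trans (hrowG i)
      calc ∑ a, pihat i a * δ i a = (∑ a, muhat i a * δ i a) / ∑ a, muhat i a := hc i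
        _ ≤ G / ((1 - γ) / Fintype.card S) :=
            div_le_div₀ hG0 (hrowG i) (div_pos h1γ hn) (hw i)
        _ = Fintype.card S / (1 - γ) * G := by field_simp)
  have hC : (Fintype.card S / (1 - γ) * G) / (1 - γ) = Fintype.card S / (1 - γ) ^ 2 * G := by
    field_simp
  rw [hC] at key
  rw [pi_norm_le_iff_of_nonempty]
  intro i
  rw [Real.norm_eq_abs, abs_of_nonneg (key i).1]
  exact (key i).2
end

section
/- Let q ∈ ℝ^S be a probability vector with q_i > 0 for all i∈S, and let 0 < c₁ ≤ c₂ be constants such that every randomized policy π admits a stationary distribution ν^π (a probability vector with ν^π = (P^π)^T ν^π) satisfying c₁ q ≤ ν^π ≤ c₂ q componentwise. Let θ = 1 − γ + γ c₁/c₂, let μ̂ ∈ ℝ^{S×A} satisfy μ̂ ≥ 0, Σ_{i∈S,a∈A} μ̂_{i,a} = 1, and Σ_{a∈A} μ̂_{i,a} ≥ θ q_i for every i∈S, and let π̂ be the randomized policy with π̂_{i,a} = μ̂_{i,a} / Σ_{a'∈A} μ̂_{i,a'}. Then q^T v* − q^T v^{π̂} ≤ (c₂²/((1−γ) c₁²))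 · Σ_{i∈S,a∈A} μ̂_{i,a} ( v*_i − γ Σ_{j∈S} p_{ij}(a) v*_j − r_a(i) ). -/
/-!
The Bellman equation makes every advantage `v*_i - γ Σ_j p_{ij}(a) v*_j - r_a(i)` nonnegative; let
`b` be its average under `π̂`. The difference `w = v* - v^{π̂}` solves `w = γ P w + b` with
`P = P^{π̂}`, so `w ≥ 0` by the maximum principle, and pairing with the stationary distribution `ν`
of `π̂` gives `(1 - γ) νᵀ w = νᵀ b`. Writing `ξ_i = Σ_a μ̂_{i,a}`, the comparisons `c₁ q ≤ ν ≤ c₂ q`,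
`θ q ≤ ξ` and `c₁ / c₂ ≤ θ` (a convex combination of `1` and `c₁ / c₂`) give
`c₁ qᵀ w ≤ νᵀ w = νᵀ b / (1 - γ)` and `νᵀ b ≤ c₂ qᵀ b ≤ (c₂² / c₁) ξᵀ b`, and `ξᵀ b` is the gap sum.
-/

/-- Maximum principle for the discounted Poisson equation. -/
lemma poisson_nonneg {S : Type*} [Fintype S] {γ : ℝ} (hγ0 : 0 ≤ γ) (hγ1 : γ < 1)
    {P : S → S → ℝ} (hP0 : ∀ i j, 0 ≤ P i j) (hP1 : ∀ i, ∑ j, P i j = 1)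
    {w b : S → ℝ} (hb : ∀ i, 0 ≤ b i) (hw : ∀ i, w i = γ * ∑ j, P i j * w j + b i) (i : S) :
    0 ≤ w i := by
  haveI : Nonempty S := ⟨i⟩
  obtain ⟨m, hm⟩ := Finite.exists_min w
  have h1 : w m ≤ ∑ j, P m j * w j := by
    calc w m = ∑ j, P m j * w m := by rw [← Finset.sum_mul, hP1, one_mul]
      _ ≤ _ := Finset.sum_le_sum fun j _ => mul_le_mul_of_nonneg_left (hm j) (hP0 m j)
  have h2 := hw m
  have h3 := mul_le_mul_of_nonneg_left h1 hγ0
  have h4 := hb m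
  have h5 : 0 ≤ w m := by
    by_contra! h
    nlinarith
  exact h5.trans (hm i)

/-- Pairing the discounted Poisson equation with a stationary vector. -/
lemma poisson_stationary {S : Type*} [Fintype S] {γ : ℝ}
    {P : S → S → ℝ} {w b ν : S → ℝ} (hν : ∀ j, ν j = ∑ i, P i j * ν i)
    (hw : ∀ i, w i = γ * ∑ j, P i j * w j + b i) :
    (1 - γ) * ∑ i, ν i * w i = ∑ i, ν i * b i := by
  have h1 : ∑ i, ν i * ∑ j, P i j * w j = ∑ j, ν j * w j := by
    calc ∑ i, ν i * ∑ j, P i j * w j = ∑ i, ∑ j, P i j * ν i * w j := by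
          refine Finset.sum_congr rfl fun i _ => ?_
          rw [Finset.mul_sum]
          exact Finset.sum_congr rfl fun j _ => by ring
      _ = ∑ j, ∑ i, P i j * ν i * w j := Finset.sum_comm
      _ = _ := by
          refine Finset.sum_congr rfl fun j _ => ?_
          rw [← Finset.sum_mul, ← hν]
  have h2 : ∑ i, ν i * w i = γ * (∑ i, ν i * ∑ j, P i j * w j) + ∑ i, ν i * b i := by
    rw [Finset.mul_sum, ← Finset.sum_add_distrib]
    refine Finset.sum_congr rfl fun i _ => ?_
    conv_lhs => rw [hw i]
    ring
  rw [h1] at h2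
  linarith


/-- Under the ergodicity assumption `c₁ q ≤ ν^π ≤ c₂ q` for every policy `π`,
with `θ = 1 − γ + γ c₁/c₂` and `μ̂ ∈ U_{θ,q}` with induced policy `π̂`,
`qᵀ v* − qᵀ v^{π̂} ≤ (c₂²/((1−γ)c₁²)) · Gap(μ̂)`. -/
theorem stmt_1
    {S A : Type*} [Fintype S] [Fintype A] [Nonempty S] [Nonempty A]
    (γ : ℝ) (hγ : γ ∈ Set.Ioo (0 : ℝ) 1)
    (p : S → A → S → ℝ)
    (hp0 : ∀ i a j, 0 ≤ p i a j) (hp1 : ∀ i a, ∑ j, p i a j = 1)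
    (r : S → A → S → ℝ) (hr : ∀ i a j, r i a j ∈ Set.Icc (0 : ℝ) 1)
    -- the optimal value vector: unique solution of the Bellman equation
    (vstar : S → ℝ)
    (hvstar : ∀ i, vstar i = ⨆ a : A,
      (γ * ∑ j, p i a j * vstar j + ∑ j, p i a j * r i a j))
    -- q is a positive probability vector
    (q : S → ℝ) (hqpos : ∀ i, 0 < q i) (hqsum : ∑ i, q i = 1)
    -- ergodicity: every randomized policy admits a stationary distribution ν^π
    -- with c₁ q ≤ ν^π ≤ c₂ q
    (c₁ c₂ : ℝ) (hc₁ : 0 < c₁) (hc₁₂ : c₁ ≤ c₂)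
    (herg : ∀ π : S → A → ℝ, (∀ i a, 0 ≤ π i a) → (∀ i, ∑ a, π i a = 1) →
      ∃ ν : S → ℝ, (∀ i, 0 ≤ ν i) ∧ (∑ i, ν i = 1) ∧
        (∀ j, ν j = ∑ i, (∑ a, π i a * p i a j) * ν i) ∧
        (∀ i, c₁ * q i ≤ ν i) ∧ (∀ i, ν i ≤ c₂ * q i))
    -- θ = 1 − γ + γ c₁/c₂
    (θ : ℝ) (hθ : θ = 1 - γ + γ * c₁ / c₂)
    -- μ̂ belongs to U_{θ,q}
    (muhat : S → A → ℝ)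
    (hmu0 : ∀ i a, 0 ≤ muhat i a)
    (hmu1 : ∑ i, ∑ a, muhat i a = 1)
    (hmuq : ∀ i, θ * q i ≤ ∑ a, muhat i a)
    -- π̂ is the induced randomized policy
    (pihat : S → A → ℝ)
    (hpihat : ∀ i a, pihat i a = muhat i a / ∑ a', muhat i a')
    -- v^{π̂}: the value vector of the policy π̂
    (vhat : S → ℝ)
    (hvhat : ∀ i, vhat i =
      γ * ∑ j, (∑ a, pihat i a * p i a j) * vhat j
        + ∑ a, pihat i a * ∑ j, p i a j * r i a j) :
    ∑ i, q i * vstar i - ∑ i, q i * vhat i ≤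
      (c₂ ^ 2 / ((1 - γ) * c₁ ^ 2)) *
        ∑ i, ∑ a, muhat i a *
          (vstar i - γ * ∑ j, p i a j * vstar j - ∑ j, p i a j * r i a j) := by
  obtain ⟨hγ0, hγ1⟩ := hγ
  have hc₂ : 0 < c₂ := hc₁.trans_le hc₁₂
  have hθc : c₁ ≤ θ * c₂ := by
    have h : θ * c₂ = (1 - γ) * c₂ + γ * c₁ := by rw [hθ]; field_simp
    rw [h]
    nlinarith
  have hθ0 : 0 < θ := pos_of_mul_pos_left (hc₁.trans_le hθc) hc₂.le
  set adv : S → A → ℝ := fun i a =>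
    vstar i - γ * ∑ j, p i a j * vstar j - ∑ j, p i a j * r i a j with hadv
  have hadv0 : ∀ i a, 0 ≤ adv i a := by
    intro i a
    have h := le_ciSup (f := fun a : A =>
      (γ * ∑ j, p i a j * vstar j + ∑ j, p i a j * r i a j)) (Set.finite_range _).bddAbove a
    rw [← hvstar i] at h
    simp only [hadv]
    linarith
  have hξ : ∀ i, 0 < ∑ a, muhat i a := fun i => (mul_pos hθ0 (hqpos i)).trans_le (hmuq i)
  have hpi0 : ∀ i a, 0 ≤ pihat i a := fun i a => by
    rw [hpihat]; exact div_nonneg (hmu0 i a) (hξ i).le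
  have hpi1 : ∀ i, ∑ a, pihat i a = 1 := fun i => by
    simp only [hpihat]
    rw [← Finset.sum_div, div_self (hξ i).ne']
  obtain ⟨ν, -, -, hν, hν1, hν2⟩ := herg pihat hpi0 hpi1
  set P : S → S → ℝ := fun i j => ∑ a, pihat i a * p i a j with hP
  set b : S → ℝ := fun i => ∑ a, pihat i a * adv i a with hb
  have hb0 : ∀ i, 0 ≤ b i := fun i =>
    Finset.sum_nonneg fun a _ => mul_nonneg (hpi0 i a) (hadv0 i a)
  have hP0 : ∀ i j, 0 ≤ P i j := fun i j =>
    Finset.sum_nonneg fun a _ => mul_nonneg (hpi0 i a) (hp0 i a j)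
  have hP1 : ∀ i, ∑ j, P i j = 1 := fun i => by
    simp only [hP]
    rw [Finset.sum_comm]
    simp only [← Finset.mul_sum, hp1, mul_one, hpi1]
  have hPv : ∀ i, ∑ a, pihat i a * ∑ j, p i a j * vstar j = ∑ j, P i j * vstar j := by
    intro i
    simp only [hP, Finset.mul_sum, Finset.sum_mul]
    rw [Finset.sum_comm]
    exact Finset.sum_congr rfl fun j _ => Finset.sum_congr rfl fun a _ => by ring
  have hbi : ∀ i, b i = vstar i - γ * ∑ j, P i j * vstar j
      - ∑ a, pihat i a * ∑ j, p i a j * r i a j := by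
    intro i
    have h : vstar i = ∑ a, pihat i a * vstar i := by rw [← Finset.sum_mul, hpi1, one_mul]
    rw [← hPv, Finset.mul_sum]
    conv_rhs => rw [h]
    rw [← Finset.sum_sub_distrib, ← Finset.sum_sub_distrib]
    exact Finset.sum_congr rfl fun a _ => by simp only [hadv]; ring
  set w : S → ℝ := fun i => vstar i - vhat i with hw
  have hweq : ∀ i, w i = γ * ∑ j, P i j * w j + b i := by
    intro i
    have h : ∑ j, P i j * w j = ∑ j, P i j * vstar j - ∑ j, P i j * vhat j := by
      rw [← Finset.sum_sub_distrib]
      exact Finset.sum_congr rfl fun j _ => by simp only [hw]; ring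
    have h2 := hvhat i
    rw [h, hbi]
    simp only [hw]
    linarith
  have hw0 := poisson_nonneg hγ0.le hγ1 hP0 hP1 hb0 hweq
  have hst := poisson_stationary hν hweq
  have hqw : c₁ * ∑ i, q i * w i ≤ ∑ i, ν i * w i := by
    rw [Finset.mul_sum]
    refine Finset.sum_le_sum fun i _ => ?_
    rw [← mul_assoc]
    exact mul_le_mul_of_nonneg_right (hν1 i) (hw0 i)
  have hgap : ∑ i, ∑ a, muhat i a * adv i a = ∑ i, (∑ a, muhat i a) * b i := by
    refine Finset.sum_congr rfl fun i _ => ?_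
    rw [hb, Finset.mul_sum]
    refine Finset.sum_congr rfl fun a _ => ?_
    rw [hpihat, ← mul_assoc, mul_div_cancel₀ _ (hξ i).ne']
  have hνb : c₁ * ∑ i, ν i * b i ≤ c₂ ^ 2 * ∑ i, (∑ a, muhat i a) * b i := by
    rw [Finset.mul_sum, Finset.mul_sum]
    refine Finset.sum_le_sum fun i _ => ?_
    rw [← mul_assoc, ← mul_assoc]
    refine mul_le_mul_of_nonneg_right ?_ (hb0 i)
    calc c₁ * ν i ≤ c₁ * (c₂ * q i) := mul_le_mul_of_nonneg_left (hν2 i) hc₁.le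
      _ ≤ (θ * c₂) * (c₂ * q i) :=
          mul_le_mul_of_nonneg_right hθc (mul_nonneg hc₂.le (hqpos i).le)
      _ = c₂ ^ 2 * (θ * q i) := by ring
      _ ≤ _ := mul_le_mul_of_nonneg_left (hmuq i) (sq_nonneg _)
  have hL : ∑ i, q i * vstar i - ∑ i, q i * vhat i = ∑ i, q i * w i := by
    rw [← Finset.sum_sub_distrib]
    exact Finset.sum_congr rfl fun i _ => by simp only [hw]; ring
  have hpos : 0 < (1 - γ) * c₁ ^ 2 := mul_pos (sub_pos.2 hγ1) (pow_pos hc₁ 2)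
  rw [hL, hgap, div_mul_eq_mul_div, le_div_iff₀ hpos]
  calc (∑ i, q i * w i) * ((1 - γ) * c₁ ^ 2)
      = c₁ * ((1 - γ) * (c₁ * ∑ i, q i * w i)) := by ring
    _ ≤ c₁ * ((1 - γ) * ∑ i, ν i * w i) := by
        have := sub_pos.2 hγ1
        gcongr
    _ ≤ _ := by rw [hst]; exact hνb
end

section
/- Let S and A be finite nonempty sets, let θ ∈ (0,1), let q ∈ ℝ^S be a probability vector with q_i > 0 for all i∈S, and suppose μ ∈ ℝ^{S×A} satisfies μ ≥ 0 componentwise, Σ_{i∈S,a∈A} μ_{i,a} = 1, and Σ_{a∈A} μ_{i,a} ≥ θ q_i for every i∈S. Then there exist a probability vector λ over S×A and, for each i∈S, a probability vector π_i over A, such that μ_{i,a} = (1−θ) λ_{i,a} + θ q_i π_{i,a} for all i∈S and a∈A. -/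
/-!
Take `π_i` to be the conditional law of the action given the state `i`, namely `μ_{i,a} / m_i`
with `m_i = Σ_a μ_{i,a}`, which is positive because `m_i ≥ θ q_i > 0`. Then `θ q_i π_{i,a}` is
the fraction `θ q_i / m_i ≤ 1` of `μ_{i,a}`, so the remainder `μ_{i,a} - θ q_i π_{i,a}` is
nonnegative with total mass `1 - θ`, and `λ` is that remainder rescaled by `1 / (1 - θ)`.
-/


/-- Any `μ ∈ U_{θ,q}` decomposes as `μ_{i,a} = (1−θ)λ_{i,a} + θ q_i π_{i,a}`
for some probability vector `λ` over `S×A` and probability vectors `π_i` over `A`. -/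
theorem stmt_6
    {S A : Type*} [Fintype S] [Fintype A] [Nonempty S] [Nonempty A]
    (θ : ℝ) (hθ : θ ∈ Set.Ioo (0 : ℝ) 1)
    (q : S → ℝ) (hqpos : ∀ i, 0 < q i) (hqsum : ∑ i, q i = 1)
    (μ : S → A → ℝ)
    (hμ0 : ∀ i a, 0 ≤ μ i a)
    (hμ1 : ∑ i, ∑ a, μ i a = 1)
    (hμq : ∀ i, θ * q i ≤ ∑ a, μ i a) :
    ∃ (lam : S → A → ℝ) (π : S → A → ℝ),
      (∀ i a, 0 ≤ lam i a) ∧ (∑ i, ∑ a, lam i a = 1) ∧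
      (∀ i a, 0 ≤ π i a) ∧ (∀ i, ∑ a, π i a = 1) ∧
      (∀ i a, μ i a = (1 - θ) * lam i a + θ * q i * π i a) := by
  obtain ⟨hθ0, hθ1⟩ := hθ
  have hm : ∀ i, 0 < ∑ a, μ i a := fun i => (mul_pos hθ0 (hqpos i)).trans_le (hμq i)
  have hθ' : 0 < 1 - θ := sub_pos.2 hθ1
  have hπ : ∀ i, ∑ a, μ i a / ∑ b, μ i b = 1 := fun i => by
    rw [← Finset.sum_div, div_self (hm i).ne']
  refine ⟨fun i a => (μ i a - θ * q i * (μ i a / ∑ b, μ i b)) / (1 - θ),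
    fun i a => μ i a / ∑ b, μ i b, fun i a => ?_, ?_,
    fun i a => div_nonneg (hμ0 i a) (hm i).le, hπ, fun i a => ?_⟩
  · refine div_nonneg (sub_nonneg.2 ?_) hθ'.le
    rw [← mul_div_assoc, div_le_iff₀ (hm i), mul_comm (μ i a)]
    exact mul_le_mul_of_nonneg_right (hμq i) (hμ0 i a)
  · simp only [← Finset.sum_div, Finset.sum_sub_distrib, ← Finset.mul_sum]
    simp only [fun i => div_self (hm i).ne', mul_one, hμ1, ← Finset.mul_sum, hqsum]
    exact div_self hθ'.ne'
  · rw [mul_div_cancel₀ _ hθ'.ne', sub_add_cancel]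
end

section
/- Let S be a finite nonempty set, let P ∈ ℝ^{S×S} be a row-stochastic matrix, let γ ∈ (0,1), let q ∈ ℝ^S be a probability vector, let ν ∈ ℝ^S be a probability vector with ν = P^T ν, and let 0 < c₁ ≤ c₂ satisfy c₁ q ≤ ν ≤ c₂ q componentwise. Then the unique vector x ∈ ℝ^S satisfying (I − γ P^T) x = (1−γ) q satisfies x ≥ (1 − γ + γ c₁/c₂) q componentwise. -/
/-!
The matrix `(1 - γP)ᵀ` is monotone: if `(1 - γP)ᵀ y ≥ 0` then `y ≥ 0`, because the negative part
`n` of `y` satisfies `n ≤ γ Pᵀ n`, and summing over coordinates (`Pᵀ` preserves total mass) gives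
`∑ n ≤ γ ∑ n`, hence `n = 0`. Monotonicity gives injectivity, hence existence and uniqueness of `x`.

For the bound, `y = x - (1-γ) q - (γ/c₂) ν` satisfies
`(1 - γP)ᵀ y = γ (1-γ) Pᵀ (q - ν/c₂) ≥ 0`, by stationarity of `ν` and `ν ≤ c₂ q`. So
`x ≥ (1-γ) q + (γ/c₂) ν`, and `ν ≥ c₁ q` finishes.
-/

open Matrix

private lemma transpose_mulVec_apply {S : Type*} [Fintype S] [DecidableEq S]
    (P : Matrix S S ℝ) (γ : ℝ) (y : S → ℝ) (i : S) :
    ((1 - γ • P)ᵀ *ᵥ y) i = y i - γ * ∑ j, P j i * y j := by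
  rw [transpose_sub, transpose_one, transpose_smul, sub_mulVec, one_mulVec, smul_mulVec]
  simp [mulVec, dotProduct]

/-- Monotonicity of `(1 - γP)ᵀ` (a discounted maximum principle). -/
private lemma nonneg_of_mulVec_nonneg {S : Type*} [Fintype S] [DecidableEq S]
    (P : Matrix S S ℝ) (hP0 : ∀ i j, 0 ≤ P i j) (hP1 : ∀ i, ∑ j, P i j = 1)
    (γ : ℝ) (hγ : γ ∈ Set.Ioo (0 : ℝ) 1) (y : S → ℝ)
    (hy : ∀ i, 0 ≤ ((1 - γ • P)ᵀ *ᵥ y) i) (i : S) : 0 ≤ y i := by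
  obtain ⟨h0, h1⟩ := hγ
  have hn : ∀ i, 0 ≤ max (-y i) 0 := fun i => le_max_right _ _
  have key : ∀ i, max (-y i) 0 ≤ γ * ∑ j, P j i * max (-y j) 0 := by
    intro i
    refine max_le ?_ (mul_nonneg h0.le (Finset.sum_nonneg fun j _ => mul_nonneg (hP0 _ _) (hn j)))
    have h := hy i
    rw [transpose_mulVec_apply] at h
    have h2 : -∑ j, P j i * y j ≤ ∑ j, P j i * max (-y j) 0 := by
      rw [← Finset.sum_neg_distrib]
      refine Finset.sum_le_sum fun j _ => ?_
      rw [← mul_neg]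
      exact mul_le_mul_of_nonneg_left (le_max_left _ _) (hP0 _ _)
    nlinarith [mul_le_mul_of_nonneg_left h2 h0.le]
  have hsum : ∑ i, max (-y i) 0 ≤ γ * ∑ j, max (-y j) 0 := by
    calc ∑ i, max (-y i) 0 ≤ ∑ i, γ * ∑ j, P j i * max (-y j) 0 :=
          Finset.sum_le_sum fun i _ => key i
      _ = γ * ∑ j, max (-y j) 0 := by
          rw [← Finset.mul_sum, Finset.sum_comm]
          simp_rw [← Finset.sum_mul, hP1, one_mul]
  have hle : max (-y i) 0 ≤ ∑ j, max (-y j) 0 :=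
    Finset.single_le_sum (f := fun j => max (-y j) 0) (fun j _ => hn j) (Finset.mem_univ i)
  have hy' : -y i ≤ max (-y i) 0 := le_max_left _ _
  nlinarith

/-- If `ν = Pᵀν` is a stationary distribution with `c₁ q ≤ ν ≤ c₂ q`, then the
unique `x` with `(I − γPᵀ) x = (1−γ) q` satisfies `x ≥ (1 − γ + γ c₁/c₂) q` componentwise. -/
theorem stmt_8
    {S : Type*} [Fintype S] [DecidableEq S] [Nonempty S]
    (P : Matrix S S ℝ) (hP0 : ∀ i j, 0 ≤ P i j) (hP1 : ∀ i, ∑ j, P i j = 1)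
    (γ : ℝ) (hγ : γ ∈ Set.Ioo (0 : ℝ) 1)
    (q : S → ℝ) (hq0 : ∀ i, 0 ≤ q i) (hqsum : ∑ i, q i = 1)
    (ν : S → ℝ) (hν0 : ∀ i, 0 ≤ ν i) (hνsum : ∑ i, ν i = 1)
    (hstat : ν = Pᵀ *ᵥ ν)
    (c₁ c₂ : ℝ) (hc₁ : 0 < c₁) (hc₁₂ : c₁ ≤ c₂)
    (hlow : ∀ i, c₁ * q i ≤ ν i) (hhigh : ∀ i, ν i ≤ c₂ * q i) :
    (∃! x : S → ℝ, (1 - γ • P)ᵀ *ᵥ x = (1 - γ) • q) ∧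
    (∀ x : S → ℝ, (1 - γ • P)ᵀ *ᵥ x = (1 - γ) • q →
      ∀ i, (1 - γ + γ * c₁ / c₂) * q i ≤ x i) := by
  have hinj : Function.Injective ((1 - γ • P)ᵀ *ᵥ ·) := by
    intro x y hxy
    have hxy' : (1 - γ • P)ᵀ *ᵥ x = (1 - γ • P)ᵀ *ᵥ y := hxy
    funext i
    have h1 := nonneg_of_mulVec_nonneg P hP0 hP1 γ hγ (x - y)
      (fun i => by rw [mulVec_sub, hxy', sub_self]; rfl) i
    have h2 := nonneg_of_mulVec_nonneg P hP0 hP1 γ hγ (y - x)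
      (fun i => by rw [mulVec_sub, hxy', sub_self]; rfl) i
    simp only [Pi.sub_apply] at h1 h2
    linarith
  have hsurj : Function.Surjective ((1 - γ • P)ᵀ *ᵥ ·) :=
    (LinearMap.injective_iff_surjective (f := (1 - γ • P)ᵀ.mulVecLin)).mp hinj
  refine ⟨?_, fun x hx i => ?_⟩
  · obtain ⟨x, hx⟩ := hsurj ((1 - γ) • q)
    exact ⟨x, hx, fun z hz => hinj (hz.trans hx.symm)⟩
  · have hc₂ : 0 < c₂ := hc₁.trans_le hc₁₂
    have hy := nonneg_of_mulVec_nonneg P hP0 hP1 γ hγ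
      (x - (1 - γ) • q - (γ / c₂) • ν) (fun k => by
        have hνk : ∑ j, P j k * ν j = ν k := (congrFun hstat k).symm
        have hle : ν k / c₂ ≤ ∑ j, P j k * q j := by
          rw [div_le_iff₀ hc₂, ← hνk, Finset.sum_mul]
          refine Finset.sum_le_sum fun j _ => ?_
          rw [mul_assoc, mul_comm (q j)]
          exact mul_le_mul_of_nonneg_left (hhigh j) (hP0 _ _)
        rw [mulVec_sub, mulVec_sub, hx, mulVec_smul, mulVec_smul]
        simp only [Pi.sub_apply, Pi.smul_apply, smul_eq_mul, transpose_mulVec_apply, hνk]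
        have h := mul_nonneg (mul_nonneg hγ.1.le (sub_nonneg.2 hγ.2.le)) (sub_nonneg.2 hle)
        have e : (1 - γ) * q k - (1 - γ) * (q k - γ * ∑ j, P j k * q j)
            - γ / c₂ * (ν k - γ * ν k)
            = γ * (1 - γ) * (∑ j, P j k * q j - ν k / c₂) := by ring
        rw [e]
        exact h) i
    simp only [Pi.sub_apply, Pi.smul_apply, smul_eq_mul] at hy
    have h := mul_le_mul_of_nonneg_left (hlow i) (div_nonneg hγ.1.le hc₂.le)
    have e : (1 - γ + γ * c₁ / c₂) * q i = (1 - γ) * q i + γ / c₂ * (c₁ * q i) := by ring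
    rw [e]
    linarith
end

section
/- Let X be a finite nonempty set, let λ be a probability vector over X, and let Δ ∈ ℝ^X with Δ_x ≤ 0 for all x∈X. Then log( Σ_{x∈X} λ_x e^{Δ_x} ) ≤ Σ_{x∈X} λ_x Δ_x + (1/2) Σ_{x∈X} λ_x Δ_x². -/
/-!
The pointwise bound `exp t ≤ 1 + t + t² / 2` for `t ≤ 0`, averaged against the probability vector,
bounds the sum inside the logarithm by one plus the right-hand side; `log s ≤ s - 1` concludes. This
last step needs `s > 0`, which holds because the weights are nonnegative and not all zero.
-/

/-- Reflecting `1 + t + t² / 2 ≤ exp t` (`t ≥ 0`) through `exp x * exp (-x) = 1`: the bound follows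
from `(1 + x + x² / 2) * (1 - x + x² / 2) = 1 + x⁴ / 4 ≥ 1`. -/
theorem exp_le_quadratic_of_nonpos {x : ℝ} (hx : x ≤ 0) : Real.exp x ≤ 1 + x + x ^ 2 / 2 := by
  have hq : 1 + -x + (-x) ^ 2 / 2 ≤ Real.exp (-x) :=
    Real.quadratic_le_exp_of_nonneg (neg_nonneg.mpr hx)
  have hpos : 0 < 1 + -x + (-x) ^ 2 / 2 := by nlinarith [sq_nonneg x]
  refine le_of_mul_le_mul_right ?_ hpos
  calc Real.exp x * (1 + -x + (-x) ^ 2 / 2)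
      ≤ Real.exp x * Real.exp (-x) := mul_le_mul_of_nonneg_left hq (Real.exp_pos x).le
    _ = 1 := by rw [← Real.exp_add, add_neg_cancel, Real.exp_zero]
    _ ≤ (1 + x + x ^ 2 / 2) * (1 + -x + (-x) ^ 2 / 2) := by nlinarith [sq_nonneg (x ^ 2)]

/-- For a probability vector `λ` and `Δ ≤ 0`,
`log(Σ_x λ_x e^{Δ_x}) ≤ Σ_x λ_x Δ_x + (1/2) Σ_x λ_x Δ_x²`. -/
theorem stmt_9
    {X : Type*} [Fintype X] [Nonempty X]
    (lam : X → ℝ) (hlam0 : ∀ x, 0 ≤ lam x) (hlam1 : ∑ x, lam x = 1)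
    (Δ : X → ℝ) (hΔ : ∀ x, Δ x ≤ 0) :
    Real.log (∑ x, lam x * Real.exp (Δ x)) ≤
      ∑ x, lam x * Δ x + (1 / 2) * ∑ x, lam x * (Δ x) ^ 2 := by
  have hsum : ∑ x, lam x * Real.exp (Δ x) ≤
      1 + (∑ x, lam x * Δ x + (1 / 2) * ∑ x, lam x * (Δ x) ^ 2) := by
    calc ∑ x, lam x * Real.exp (Δ x)
        ≤ ∑ x, (lam x + (lam x * Δ x + (1 / 2) * (lam x * (Δ x) ^ 2))) := by
          refine Finset.sum_le_sum fun x _ => ?_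
          have h := mul_le_mul_of_nonneg_left (exp_le_quadratic_of_nonpos (hΔ x)) (hlam0 x)
          linarith
      _ = _ := by
          rw [Finset.sum_add_distrib, Finset.sum_add_distrib, hlam1, Finset.mul_sum]
  have hpos : 0 < ∑ x, lam x * Real.exp (Δ x) := by
    have hnn : ∀ x ∈ Finset.univ, 0 ≤ lam x * Real.exp (Δ x) :=
      fun x _ => mul_nonneg (hlam0 x) (Real.exp_pos _).le
    obtain ⟨x, hx, hne⟩ := Finset.exists_ne_zero_of_sum_ne_zero (hlam1.trans_ne one_ne_zero)
    exact Finset.sum_pos' hnn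
      ⟨x, hx, mul_pos (lt_of_le_of_ne (hlam0 x) hne.symm) (Real.exp_pos _)⟩
  linarith [Real.log_le_sub_one_of_pos hpos]
end

section
/- Let θ ∈ [1−γ, 1], let q and ξ be probability vectors over S with q_i > 0 for all i, for each i∈S let π_i be a probability vector over A, and set s_i = (1−θ) ξ_i + θ q_i and μ_{i,a} = s_i π_{i,a}. Let α > 0, let V = { x ∈ ℝ^S : 0 ≤ x_k ≤ 1/(1−γ) for all k }, and let Π_V be the componentwise projection Π_V(x)_k = min( max(x_k, 0), 1/(1−γ) ). Let v, v* ∈ V. For each (i,a,j) ∈ S×A×S define v^{(i,a,j)} = Π_V( v − α((1−γ) q_i / s_i − 1) e_i − α γ e_j ), where e_i is the i-th standard basis vector of ℝ^S. Then Σ_{(i,a,j)∈S×A×S} μ_{i,a} p_{ij}(a) ‖v^{(i,a,j)} − v*‖² ≤ ‖v − v*‖² + 2α (v − v*)^T ( Σ_{a∈A} (I − γ P_a)^T μ_a − (1−γ) q ) + 4α², where μ_a ∈ ℝ^S denotes the vector with entries μ_{i,a} (i∈S) and ‖·‖ is the Euclidean norm. -/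
/-!
Write `d = c eᵢ + γ eⱼ` with `c = (1 - γ) qᵢ / sᵢ - 1`, so that the unprojected update is `v - α d`.
Clipping to an interval containing `vstar k` cannot increase the distance to `vstar k`, so the
squared distance after the update is at most `‖v - v*‖² - 2α ⟪v - v*, d⟫ + α² ‖d‖²`. Since
`sᵢ ≥ θ qᵢ ≥ (1 - γ) qᵢ > 0`, we have `c ∈ [-1, 0]`, hence `‖d‖² ≤ 2c² + 2γ² ≤ 4`
(`sq_dist_update_le`). The weights `μ i a * p i a j` are nonnegative and sum to one, and
averaging `-d` against them gives `∑ₐ (I - γ Pₐ)ᵀ μₐ - (1 - γ) q`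
(`dotProduct_drift`), because `sᵢ c = (1 - γ) qᵢ - sᵢ`.
-/

open Matrix

lemma sq_clip_sub_le {M x y : ℝ} (hy : y ∈ Set.Icc 0 M) :
    (min (max x 0) M - y) ^ 2 ≤ (x - y) ^ 2 := by
  obtain ⟨h0, h1⟩ := hy
  rcases max_cases x 0 with ⟨h, h'⟩ | ⟨h, h'⟩ <;> rw [h]
  · rcases min_cases x M with ⟨g, g'⟩ | ⟨g, g'⟩ <;> rw [g]
    nlinarith
  · rw [min_eq_left (h0.trans h1)]
    nlinarith

/-- Pathwise bound on one projected step, for a single sampled transition `i → j`. -/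
lemma sq_dist_update_le {S : Type*} [Fintype S] [DecidableEq S] {γ c α M : ℝ}
    (hγ0 : 0 ≤ γ) (hγ1 : γ ≤ 1) (hc0 : -1 ≤ c) (hc1 : c ≤ 0)
    (v u : S → ℝ) (hu : ∀ k, u k ∈ Set.Icc 0 M) (i j : S) :
    ∑ k, (min (max (v k - α * c * (if k = i then 1 else 0)
        - α * γ * (if k = j then 1 else 0)) 0) M - u k) ^ 2 ≤
      ∑ k, (v k - u k) ^ 2 + 4 * α ^ 2 - 2 * α * (c * (v i - u i) + γ * (v j - u j)) := by
  have key : ∀ k, (min (max (v k - α * c * (if k = i then 1 else 0)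
        - α * γ * (if k = j then 1 else 0)) 0) M - u k) ^ 2 ≤
      (v k - u k) ^ 2 + (if k = i then 2 * α ^ 2 * c ^ 2 - 2 * α * c * (v k - u k) else 0)
        + (if k = j then 2 * α ^ 2 * γ ^ 2 - 2 * α * γ * (v k - u k) else 0) := by
    intro k
    refine (sq_clip_sub_le (hu k)).trans ?_
    split_ifs
    · nlinarith [sq_nonneg (α * c - α * γ)]
    · nlinarith [sq_nonneg (α * c)]
    · nlinarith [sq_nonneg (α * γ)]
    · simp
  refine (Finset.sum_le_sum fun k _ => key k).trans ?_
  simp only [Finset.sum_add_distrib, Finset.sum_ite_eq', Finset.mem_univ, if_true]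
  have h1 : c ^ 2 + γ ^ 2 ≤ 2 := by nlinarith
  nlinarith [mul_le_mul_of_nonneg_left h1 (sq_nonneg α)]

/-- The pairing of `w` with the drift vector, as a sum over sampled triples `(i, a, j)`. -/
lemma dotProduct_drift {S A : Type*} [Fintype S] [Fintype A] [DecidableEq S]
    (γ : ℝ) (P : A → Matrix S S ℝ) (μ : S → A → ℝ) (q w : S → ℝ) :
    w ⬝ᵥ (∑ a, (1 - γ • P a)ᵀ *ᵥ (fun i => μ i a) - (1 - γ) • q) =
      ∑ i, ∑ a, μ i a * (w i - γ * ∑ j, P a i j * w j) - (1 - γ) * ∑ i, q i * w i := by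
  have h : ∀ a, w ⬝ᵥ ((1 - γ • P a)ᵀ *ᵥ (fun i => μ i a)) =
      ∑ i, μ i a * (w i - γ * ∑ j, P a i j * w j) := by
    intro a
    rw [Matrix.mulVec_transpose, dotProduct_comm, ← Matrix.dotProduct_mulVec,
      Matrix.sub_mulVec, Matrix.one_mulVec, Matrix.smul_mulVec]
    rfl
  rw [dotProduct_sub, dotProduct_sum, dotProduct_smul, dotProduct_comm w q,
    Finset.sum_comm (s := (Finset.univ : Finset S))]
  simp only [h]
  rfl

/-- One-step expected squared-distance drift bound for the projected
primal (value) update. -/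
theorem stmt_14
    {S A : Type*} [Fintype S] [Fintype A] [Nonempty S] [Nonempty A] [DecidableEq S]
    (γ : ℝ) (hγ : γ ∈ Set.Ioo (0 : ℝ) 1)
    (p : S → A → S → ℝ)
    (hp0 : ∀ i a j, 0 ≤ p i a j) (hp1 : ∀ i a, ∑ j, p i a j = 1)
    (P : A → Matrix S S ℝ) (hP : ∀ a i j, P a i j = p i a j)
    (θ : ℝ) (hθ : θ ∈ Set.Icc (1 - γ) 1)
    (q : S → ℝ) (hq0 : ∀ i, 0 < q i) (hq1 : ∑ i, q i = 1)
    (ξ : S → ℝ) (hξ0 : ∀ i, 0 ≤ ξ i) (hξ1 : ∑ i, ξ i = 1)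
    (π : S → A → ℝ) (hπ0 : ∀ i a, 0 ≤ π i a) (hπ1 : ∀ i, ∑ a, π i a = 1)
    (s : S → ℝ) (hs : ∀ i, s i = (1 - θ) * ξ i + θ * q i)
    (μ : S → A → ℝ) (hμ : ∀ i a, μ i a = s i * π i a)
    (α : ℝ) (hα : 0 < α)
    (v vstar : S → ℝ)
    (hv : ∀ k, v k ∈ Set.Icc (0 : ℝ) (1 / (1 - γ)))
    (hvstar : ∀ k, vstar k ∈ Set.Icc (0 : ℝ) (1 / (1 - γ)))
    -- the projected updated value vector v^{(i,a,j)}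
    (v' : S → A → S → S → ℝ)
    (hv' : ∀ i a j k, v' i a j k =
      min (max (v k - α * ((1 - γ) * q i / s i - 1) * (if k = i then 1 else 0)
                    - α * γ * (if k = j then 1 else 0)) 0) (1 / (1 - γ))) :
    ∑ i, ∑ a, ∑ j, μ i a * p i a j * (∑ k, (v' i a j k - vstar k) ^ 2) ≤
      (∑ k, (v k - vstar k) ^ 2)
        + 2 * α * ((v - vstar) ⬝ᵥ
            (∑ a, (1 - γ • P a)ᵀ *ᵥ (fun i => μ i a) - (1 - γ) • q))
        + 4 * α ^ 2 := by
  obtain ⟨hγ0, hγ1⟩ := hγ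
  have hγ' : 0 < 1 - γ := by linarith
  have hsq : ∀ i, (1 - γ) * q i ≤ s i := fun i => by
    rw [hs i]
    nlinarith [mul_nonneg (sub_nonneg.2 hθ.2) (hξ0 i),
      mul_le_mul_of_nonneg_right hθ.1 (hq0 i).le]
  have hspos : ∀ i, 0 < s i := fun i => (mul_pos hγ' (hq0 i)).trans_le (hsq i)
  have hs1 : ∑ i, s i = 1 := by
    simp only [hs, Finset.sum_add_distrib, ← Finset.mul_sum, hξ1, hq1]
    ring
  have hμ0 : ∀ i a, 0 ≤ μ i a := fun i a => by
    rw [hμ]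
    exact mul_nonneg (hspos i).le (hπ0 i a)
  have hμs : ∀ i, ∑ a, μ i a = s i := fun i => by
    simp only [hμ, ← Finset.mul_sum, hπ1, mul_one]
  set c : S → ℝ := fun i => (1 - γ) * q i / s i - 1 with hc
  have hc0 : ∀ i, -1 ≤ c i := fun i => by
    have := div_nonneg (mul_nonneg hγ'.le (hq0 i).le) (hspos i).le
    simp only [hc]
    linarith
  have hc1 : ∀ i, c i ≤ 0 := fun i => by
    have := (div_le_one (hspos i)).2 (hsq i)
    simp only [hc]
    linarith
  have hsc : ∀ i, s i * c i = (1 - γ) * q i - s i := fun i => by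
    have := (hspos i).ne'
    simp only [hc]
    field_simp
  set w : S → ℝ := v - vstar with hw
  set D := ∑ k, (v k - vstar k) ^ 2 with hD
  have step : ∀ i a j, μ i a * p i a j * (∑ k, (v' i a j k - vstar k) ^ 2) ≤
      μ i a * p i a j * (D + 4 * α ^ 2 - 2 * α * (c i * w i + γ * w j)) := fun i a j => by
    refine mul_le_mul_of_nonneg_left ?_ (mul_nonneg (hμ0 i a) (hp0 i a j))
    simp only [hv']
    exact sq_dist_update_le hγ0.le hγ1.le (hc0 i) (hc1 i) v vstar hvstar i j
  refine (Finset.sum_le_sum fun i _ => Finset.sum_le_sum fun a _ =>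
    Finset.sum_le_sum fun j _ => step i a j).trans (le_of_eq ?_)
  rw [dotProduct_drift]
  simp only [hP]
  have inner : ∀ i a,
      ∑ j, μ i a * p i a j * (D + 4 * α ^ 2 - 2 * α * (c i * w i + γ * w j)) =
      μ i a * (D + 4 * α ^ 2 - 2 * α * (c i * w i + w i)) +
        2 * α * (μ i a * (w i - γ * ∑ j, p i a j * w j)) := fun i a => by
    calc _ = ∑ j, (p i a j * (μ i a * (D + 4 * α ^ 2 - 2 * α * (c i * w i)))
            - 2 * α * μ i a * γ * (p i a j * w j)) :=
          Finset.sum_congr rfl fun j _ => by ring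
      _ = _ := by
          rw [Finset.sum_sub_distrib, ← Finset.sum_mul, ← Finset.mul_sum, hp1]
          ring
  -- The remaining factor no longer depends on the action, and `s (c + 1) = (1 - γ) q`.
  have outer : ∀ i, s i * (D + 4 * α ^ 2 - 2 * α * (c i * w i + w i)) =
      s i * (D + 4 * α ^ 2) - 2 * α * (1 - γ) * (q i * w i) := fun i => by
    linear_combination (-2 * α * w i) * hsc i
  simp only [inner, Finset.sum_add_distrib, ← Finset.sum_mul, hμs, outer,
    Finset.sum_sub_distrib, ← Finset.mul_sum, hs1]
  ring
end

section
/- Let θ ∈ (0,1), let q be a probability vector over S with q_i > 0 for all i, let ξ be a probability vector over S with ξ_i > 0 for all i, for each i∈S let π_i be a probability vector over A with π_{i,a} > 0 for all a, and set λ_{i,a} = ξ_i π_{i,a} and μ_{i,a} = ((1−θ) ξ_i + θ q_i) π_{i,a}. Let λ* be a probability vector over S×A, for each i∈S let π*_i be a probability vector over A, and set μ*_{i,a} = (1−θ) λ*_{i,a} + θ q_i π*_{i,a}. Let v ∈ ℝ^S with 0 ≤ v_k ≤ 1/(1−γ) for all k, M = 1/(1−γ), and β > 0. For each (i,a,j)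 ∈ S×A×S let Δ^{(i,a,j)} ∈ ℝ^{S×A} have (i,a) entry β(γ v_j − v_i + r_{ij}(a) − M)/μ_{i,a} and all other entries 0; define the updated probability vectors λ^{(i,a,j)}_{i',a'} = λ_{i',a'} exp(Δ^{(i,a,j)}_{i',a'}) / Σ_{i'',a''} λ_{i'',a''} exp(Δ^{(i,a,j)}_{i'',a''}) and, for each i'∈S, π^{(i,a,j)}_{i',a'} = π_{i',a'} exp(Δ^{(i,a,j)}_{i',a'}) / Σ_{a''} π_{i',a''} exp(Δ^{(i,a,j)}_{i',a''}). Define Φ(λ', π') = (1−θ) D_KL(λ*||λ') + θ Σ_{i∈S} q_i D_KL(π*_i||π'_i). Then Σ_{(i,a,j)∈S×A×S} μ_{i,a} p_{ij}(a) Φ(λ^{(i,a,j)}, π^{(i,a,j)}) ≤ Φ(λ, π) + β Σ_{a∈A} (μ_a − μ*_a)^T ( (γ P_a − I) v + r_a ) + 2 |S| |A| β² / (1−γ)², where μ_a, μ*_a ∈ ℝ^S denote the vectors with entries μ_{i,a} and μ*_{i,a} (i∈S). -/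
/-!
The update multiplies a single weight by `exp δ` and renormalises. For a reference vector `p`
and weights `w`, reweighting by `exp D` changes the divergence by exactly
`-∑ p D + log Z`, where `Z = ∑ w exp D` (`klDiv_reweight`). When `D` is supported at one point
with value `δ ≤ 0`, we have `Z = 1 + w (exp δ - 1)`, so `log t ≤ t - 1` and
`exp δ ≤ 1 + δ + δ² / 2` bound the increment by `(w - p) δ + w δ² / 2` (`klDiv_reweight_single_le`).

The shift by `M` makes every sampled `δ = β d / μ i a` nonpositive, with `-2 M ≤ d ≤ 0`. The mixture
`(1 - θ) λ + θ q π` is `μ`, and likewise for the starred vectors, so the potential increases by at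
most `(μ - μ*) δ + μ δ² / 2` (entries at the sampled pair). Weighting by `μ i a * p i a j` cancels
the denominators in `δ`: the quadratic part is at most `2 β² M²` for each pair `(i, a)`, and
the contribution of `M` to the linear part vanishes since `μ` and `μ*` have the same mass.
-/

/-- Kullback–Leibler divergence between probability vectors on a finite set
(with the convention `0 · log 0 = 0`, which holds since `0 * Real.log _ = 0`). -/
noncomputable def klDiv {X : Type*} [Fintype X] (p q : X → ℝ) : ℝ :=
  ∑ x, p x * Real.log (p x / q x)

/-- Kullback–Leibler divergence between probability vectors on `S × A`. -/
noncomputable def klDiv2 {S A : Type*} [Fintype S] [Fintype A] (p q : S → A → ℝ) : ℝ :=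
  ∑ i, ∑ a, p i a * Real.log (p i a / q i a)

/-- Exact change of the divergence under exponential reweighting and normalisation. -/
theorem klDiv_reweight {X : Type*} [Fintype X] [Nonempty X] (p w D : X → ℝ)
    (hp : ∑ x, p x = 1) (hw : ∀ x, 0 < w x) :
    klDiv p (fun x => w x * Real.exp (D x) / ∑ y, w y * Real.exp (D y)) =
      klDiv p w - ∑ x, p x * D x + Real.log (∑ y, w y * Real.exp (D y)) := by
  have hZ : 0 < ∑ y, w y * Real.exp (D y) :=
    Finset.sum_pos (fun y _ => mul_pos (hw y) (Real.exp_pos _)) Finset.univ_nonempty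
  set Z := ∑ y, w y * Real.exp (D y)
  have hlog : Real.log Z = ∑ x, p x * Real.log Z := by
    rw [← Finset.sum_mul, hp, one_mul]
  rw [hlog]
  unfold klDiv
  rw [← Finset.sum_sub_distrib, ← Finset.sum_add_distrib]
  refine Finset.sum_congr rfl fun x _ => ?_
  by_cases hx : p x = 0
  · simp [hx]
  · have hwx := (hw x).ne'
    rw [Real.log_div hx (by positivity), Real.log_div (by positivity) hZ.ne',
      Real.log_mul hwx (Real.exp_pos _).ne', Real.log_exp, Real.log_div hx hwx]
    ring

/-- Scaling one weight by `exp δ` with `δ ≤ 0` raises the divergence by at most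
`(w x₀ - p x₀) δ + w x₀ δ² / 2`. -/
theorem klDiv_reweight_single_le {X : Type*} [Fintype X] [DecidableEq X] (p w : X → ℝ)
    (hp : ∑ x, p x = 1) (hw : ∀ x, 0 < w x) (hw1 : ∑ x, w x = 1) (x₀ : X) {δ : ℝ} (hδ : δ ≤ 0)
    (D : X → ℝ) (hD : ∀ x, D x = if x = x₀ then δ else 0) :
    klDiv p (fun x => w x * Real.exp (D x) / ∑ y, w y * Real.exp (D y)) ≤
      klDiv p w + ((w x₀ - p x₀) * δ + w x₀ * (δ ^ 2 / 2)) := by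
  have : Nonempty X := ⟨x₀⟩
  rw [klDiv_reweight p w D hp hw]
  have hZ0 : 0 < ∑ y, w y * Real.exp (D y) :=
    Finset.sum_pos (fun y _ => mul_pos (hw y) (Real.exp_pos _)) Finset.univ_nonempty
  have hlin : ∑ x, p x * D x = p x₀ * δ := by simp [hD]
  have hZ : ∑ y, w y * Real.exp (D y) = 1 + w x₀ * (Real.exp δ - 1) := by
    have h : ∀ y, w y * Real.exp (D y) =
        w y + (if y = x₀ then w y * (Real.exp δ - 1) else 0) := by
      intro y
      rw [hD]
      split_ifs
      · ring
      · simp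
    simp only [h, Finset.sum_add_distrib, hw1]
    simp
  have hlog := Real.log_le_sub_one_of_pos hZ0
  have hexp : w x₀ * Real.exp δ ≤ w x₀ * (1 + δ + δ ^ 2 / 2) :=
    mul_le_mul_of_nonneg_left (exp_le_quadratic_of_nonpos hδ) (hw x₀).le
  rw [hlin]
  rw [hZ] at hlog ⊢
  linarith

theorem klDiv2_eq_klDiv {S A : Type*} [Fintype S] [Fintype A] (p q : S → A → ℝ) :
    klDiv2 p q = klDiv (fun x : S × A => p x.1 x.2) (fun x => q x.1 x.2) := by
  simp only [klDiv2, klDiv, Fintype.sum_prod_type]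

/-- One-step expected drift bound for the potential
`Φ(λ',π') = (1−θ) D_KL(λ*‖λ') + θ Σ_i q_i D_KL(π*_i‖π'_i)` under the exponentiated
dual update. -/
theorem stmt_15
    {S A : Type*} [Fintype S] [Fintype A] [Nonempty S] [Nonempty A]
    [DecidableEq S] [DecidableEq A]
    (γ : ℝ) (hγ : γ ∈ Set.Ioo (0 : ℝ) 1)
    (p : S → A → S → ℝ)
    (hp0 : ∀ i a j, 0 ≤ p i a j) (hp1 : ∀ i a, ∑ j, p i a j = 1)
    (r : S → A → S → ℝ) (hr : ∀ i a j, r i a j ∈ Set.Icc (0 : ℝ) 1)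
    (θ : ℝ) (hθ : θ ∈ Set.Ioo (0 : ℝ) 1)
    (q : S → ℝ) (hq0 : ∀ i, 0 < q i) (hq1 : ∑ i, q i = 1)
    (ξ : S → ℝ) (hξ0 : ∀ i, 0 < ξ i) (hξ1 : ∑ i, ξ i = 1)
    (π : S → A → ℝ) (hπ0 : ∀ i a, 0 < π i a) (hπ1 : ∀ i, ∑ a, π i a = 1)
    (lam : S → A → ℝ) (hlam : ∀ i a, lam i a = ξ i * π i a)
    (μ : S → A → ℝ) (hμ : ∀ i a, μ i a = ((1 - θ) * ξ i + θ * q i) * π i a)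
    -- λ*, π*_i probability vectors and the induced μ*
    (lamStar : S → A → ℝ) (hls0 : ∀ i a, 0 ≤ lamStar i a)
    (hls1 : ∑ i, ∑ a, lamStar i a = 1)
    (πStar : S → A → ℝ) (hπs0 : ∀ i a, 0 ≤ πStar i a) (hπs1 : ∀ i, ∑ a, πStar i a = 1)
    (μStar : S → A → ℝ)
    (hμStar : ∀ i a, μStar i a = (1 - θ) * lamStar i a + θ * q i * πStar i a)
    (v : S → ℝ) (hv : ∀ k, v k ∈ Set.Icc (0 : ℝ) (1 / (1 - γ)))
    (M : ℝ) (hM : M = 1 / (1 - γ))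
    (β : ℝ) (hβ : 0 < β)
    -- the sampled update vector Δ^{(i,a,j)}
    (Δ : S → A → S → S → A → ℝ)
    (hΔ : ∀ i a j i' a', Δ i a j i' a' =
      if i' = i ∧ a' = a then β * (γ * v j - v i + r i a j - M) / μ i a else 0)
    -- the updated probability vectors λ^{(i,a,j)} and π^{(i,a,j)}
    (lam' : S → A → S → S → A → ℝ)
    (hlam' : ∀ i a j i' a', lam' i a j i' a' =
      lam i' a' * Real.exp (Δ i a j i' a') /
        ∑ i'', ∑ a'', lam i'' a'' * Real.exp (Δ i a j i'' a''))
    (π' : S → A → S → S → A → ℝ)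
    (hπ' : ∀ i a j i' a', π' i a j i' a' =
      π i' a' * Real.exp (Δ i a j i' a') /
        ∑ a'', π i' a'' * Real.exp (Δ i a j i' a'')) :
    ∑ i, ∑ a, ∑ j, μ i a * p i a j *
        ((1 - θ) * klDiv2 lamStar (lam' i a j)
          + θ * ∑ i', q i' * klDiv (πStar i') (π' i a j i')) ≤
      ((1 - θ) * klDiv2 lamStar lam + θ * ∑ i', q i' * klDiv (πStar i') (π i'))
        + β * ∑ a, ∑ i, (μ i a - μStar i a) *
            (γ * (∑ j, p i a j * v j) - v i + ∑ j, p i a j * r i a j)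
        + 2 * (Fintype.card S : ℝ) * (Fintype.card A : ℝ) * β ^ 2 / (1 - γ) ^ 2 := by
  have hθ0 := hθ.1
  have hθ1 : 0 < 1 - θ := by linarith [hθ.2]
  have hγ1 : 0 < 1 - γ := by linarith [hγ.2]
  -- Since `γ M + 1 = M`, every `γ v j + r i a j` is at most `M`.
  have hMγ : M * (1 - γ) = 1 := by rw [hM]; field_simp
  have hM0 : 0 < M := by rw [hM]; positivity
  rw [← hM] at hv
  have hμ0 : ∀ i a, 0 < μ i a := fun i a => by
    rw [hμ]
    have := hξ0 i; have := hq0 i; have := hπ0 i a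
    positivity
  have hlam0 : ∀ i a, 0 < lam i a := fun i a => by
    rw [hlam]; exact mul_pos (hξ0 i) (hπ0 i a)
  have hlam1 : ∑ i, ∑ a, lam i a = 1 := by
    simp only [hlam, ← Finset.mul_sum, hπ1, mul_one, hξ1]
  have hμ1 : ∑ i, ∑ a, μ i a = 1 := by
    simp only [hμ, ← Finset.mul_sum, hπ1, mul_one, Finset.sum_add_distrib, hξ1, hq1]
    ring
  have hμs1 : ∑ i, ∑ a, μStar i a = 1 := by
    simp only [hμStar, Finset.sum_add_distrib, ← Finset.mul_sum, hπs1, hls1, mul_one, hq1]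
    ring
  have hd : ∀ i a j, γ * v j - v i + r i a j - M ≤ 0 ∧
      -(2 * M) ≤ γ * v j - v i + r i a j - M := fun i a j => by
    have h1 := mul_le_mul_of_nonneg_left (hv j).2 hγ.1.le
    have h2 := mul_nonneg hγ.1.le (hv j).1
    have h3 := hv i
    have h4 := hr i a j
    exact ⟨by linarith [h3.1, h4.2], by linarith [h3.2, h4.1]⟩
  set Φ := (1 - θ) * klDiv2 lamStar lam + θ * ∑ i', q i' * klDiv (πStar i') (π i') with hΦ
  have hstep : ∀ i a j, ((1 - θ) * klDiv2 lamStar (lam' i a j)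
      + θ * ∑ i', q i' * klDiv (πStar i') (π' i a j i')) ≤
      Φ + ((μ i a - μStar i a) * (β * (γ * v j - v i + r i a j - M) / μ i a)
        + μ i a * ((β * (γ * v j - v i + r i a j - M) / μ i a) ^ 2 / 2)) := by
    intro i a j
    have hδ : β * (γ * v j - v i + r i a j - M) / μ i a ≤ 0 :=
      div_nonpos_of_nonpos_of_nonneg
        (mul_nonpos_of_nonneg_of_nonpos hβ.le (hd i a j).1) (hμ0 i a).le
    have hΔ' := hΔ i a j
    set δ := β * (γ * v j - v i + r i a j - M) / μ i a
    have hl : klDiv2 lamStar (lam' i a j) ≤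
        klDiv2 lamStar lam + ((lam i a - lamStar i a) * δ + lam i a * (δ ^ 2 / 2)) := by
      have h := klDiv_reweight_single_le (fun x : S × A => lamStar x.1 x.2)
        (fun x => lam x.1 x.2) (by rw [Fintype.sum_prod_type]; exact hls1)
        (fun x => hlam0 _ _) (by rw [Fintype.sum_prod_type]; exact hlam1) (i, a) hδ
        (fun x => Δ i a j x.1 x.2) (fun x => by simp only [hΔ', Prod.ext_iff])
      simp only [Fintype.sum_prod_type] at h
      rw [klDiv2_eq_klDiv, klDiv2_eq_klDiv]
      simpa only [hlam'] using h
    have hp : ∀ i', q i' * klDiv (πStar i') (π' i a j i') ≤ q i' * klDiv (πStar i') (π i') +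
        (if i' = i then q i * ((π i a - πStar i a) * δ + π i a * (δ ^ 2 / 2)) else 0) := by
      intro i'
      have hfun : π' i a j i' = fun a' => π i' a' * Real.exp (Δ i a j i' a') /
        ∑ a'', π i' a'' * Real.exp (Δ i a j i' a'') := funext (hπ' i a j i')
      by_cases hi : i' = i
      · subst hi
        rw [if_pos rfl, ← mul_add, hfun]
        refine mul_le_mul_of_nonneg_left ?_ (hq0 i').le
        exact klDiv_reweight_single_le (πStar i') (π i') (hπs1 i') (hπ0 i') (hπ1 i') a hδ
          _ (fun x => by simp [hΔ'])
      · have : π' i a j i' = π i' := by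
          rw [hfun]; funext a'; simp [hΔ', hi, hπ1]
        rw [this, if_neg hi, add_zero]
    have hsum := Finset.sum_le_sum fun i' (_ : i' ∈ Finset.univ) => hp i'
    rw [Finset.sum_add_distrib, Finset.sum_ite_eq' Finset.univ i, if_pos (Finset.mem_univ i)]
      at hsum
    have e1 := mul_le_mul_of_nonneg_left hl hθ1.le
    have e2 := mul_le_mul_of_nonneg_left hsum hθ0.le
    refine (add_le_add e1 e2).trans_eq ?_
    rw [hΦ, hμStar, hμ, hlam]
    ring
  -- Multiplying by `μ i a` clears the denominator of `δ`; then `d² ≤ 4 M²`.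
  have hstep2 : ∀ i a j, μ i a * p i a j * ((1 - θ) * klDiv2 lamStar (lam' i a j)
      + θ * ∑ i', q i' * klDiv (πStar i') (π' i a j i')) ≤
      p i a j * (μ i a * Φ + β * (μ i a - μStar i a) * (γ * v j - v i + r i a j - M)
        + 2 * β ^ 2 * M ^ 2) := by
    intro i a j
    have hm := hμ0 i a
    have hsq : (γ * v j - v i + r i a j - M) ^ 2 ≤ 4 * M ^ 2 := by
      nlinarith [hd i a j]
    rw [mul_comm (μ i a), mul_assoc]
    refine mul_le_mul_of_nonneg_left ?_ (hp0 i a j)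
    refine (mul_le_mul_of_nonneg_left (hstep i a j) hm.le).trans ?_
    set d := γ * v j - v i + r i a j - M
    have heq : μ i a * (Φ + ((μ i a - μStar i a) * (β * d / μ i a)
        + μ i a * ((β * d / μ i a) ^ 2 / 2))) =
        μ i a * Φ + β * (μ i a - μStar i a) * d + β ^ 2 * d ^ 2 / 2 := by
      field_simp
      ring
    rw [heq]
    nlinarith [mul_le_mul_of_nonneg_left hsq (sq_nonneg β)]
  refine (Finset.sum_le_sum fun i _ => Finset.sum_le_sum fun a _ =>
    Finset.sum_le_sum fun j _ => hstep2 i a j).trans_eq ?_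
  have hj : ∀ i a, ∑ j, p i a j * (μ i a * Φ
      + β * (μ i a - μStar i a) * (γ * v j - v i + r i a j - M) + 2 * β ^ 2 * M ^ 2) =
      μ i a * Φ + β * ((μ i a - μStar i a) *
        (γ * (∑ j, p i a j * v j) - v i + ∑ j, p i a j * r i a j))
      - β * M * (μ i a - μStar i a) + 2 * β ^ 2 * M ^ 2 := by
    intro i a
    have h : ∀ j, p i a j * (μ i a * Φ
        + β * (μ i a - μStar i a) * (γ * v j - v i + r i a j - M) + 2 * β ^ 2 * M ^ 2) =
        p i a j * (μ i a * Φ - β * (μ i a - μStar i a) * (v i + M) + 2 * β ^ 2 * M ^ 2)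
        + β * (μ i a - μStar i a) * γ * (p i a j * v j)
        + β * (μ i a - μStar i a) * (p i a j * r i a j) := fun j => by ring
    simp only [h, Finset.sum_add_distrib, ← Finset.mul_sum, ← Finset.sum_mul, hp1]
    ring
  simp only [hj]
  rw [Finset.sum_comm (s := (Finset.univ : Finset A))]
  simp only [Finset.sum_add_distrib, Finset.sum_sub_distrib, ← Finset.mul_sum, ← Finset.sum_mul,
    hμ1, hμs1, Finset.sum_const, Finset.card_univ, nsmul_eq_mul]
  have hMsq : 2 * (Fintype.card S : ℝ) * (Fintype.card A : ℝ) * β ^ 2 / (1 - γ) ^ 2 =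
      2 * (Fintype.card S : ℝ) * (Fintype.card A : ℝ) * β ^ 2 * M ^ 2 := by
    rw [hM]; field_simp
  rw [hMsq]
  ring
end
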